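/- arXiv:1212.1134 — 3 statements merged into one kernel-verified Lean document; each statement's English description precedes it below -/
import Mathlib

section
/- For all j, k ≥ 0 one has 𝔖(𝔗_{2j+1}(X)·𝔗_k(X)) = (D_j/D_{j−1})·δ_{2j,k}, where δ is the Kronecker delta. -/
/-!
The even part of a polynomial in `X` is invisible to `𝔖`, while `𝔖(X · q(X²))` is the integral of
`q`. A product `𝔗_{2j+1} 𝔗_{2m+1}` is even, and `𝔗_{2j+1} 𝔗_{2m} = X · (P_j P_m)(X²)`, so only the
pairings of `P_j` and `P_m` matter, and these vanish for `j ≠ m`. Passing from the monomials to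
the monic `P_i` is a unitriangular change of basis, hence the Gram matrix of the `P_i`, which is
diagonal, has the same determinant as the Hankel matrix; the quotient of two consecutive Hankel
determinants is therefore the squared norm of `P_j`.
-/

open Polynomial MeasureTheory

section CommSemiring

variable {R : Type*} [CommSemiring R]

/-- The moment functional of a sequence `s`: the linear functional on polynomials that sends `X ^ n`
to `s n`. It is the algebraic form of integration against a measure with moments `s`. -/
noncomputable def momentFunctional (s : ℕ → R) : R[X] →ₗ[R] R :=
  (basisMonomials R).constr R s

lemma momentFunctional_monomial (s : ℕ → R) (n : ℕ) (a : R) :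
    momentFunctional s (monomial n a) = a * s n := by
  have h : momentFunctional s (monomial n 1) = s n := by
    simpa only [momentFunctional, coe_basisMonomials] using
      (basisMonomials R).constr_basis R s n
  rw [← mul_one a, ← smul_eq_mul, ← smul_monomial, map_smul, h, smul_eq_mul, smul_eq_mul, mul_one]

/-- The Hankel matrix of order `n` of a sequence `s`, indexed from `0`; the determinant written
`D_n` in the paper is the one of order `n + 1`. -/
def hankelMatrix (s : ℕ → R) (n : ℕ) : Matrix (Fin n) (Fin n) R :=
  Matrix.of fun i k => s (i.1 + k.1)

open Matrix in
lemma momentFunctional_mul (s : ℕ → R) {n : ℕ} {p q : R[X]} (hp : p.natDegree < n)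
    (hq : q.natDegree < n) :
    momentFunctional s (p * q) =
      (fun i : Fin n => p.coeff i) ⬝ᵥ hankelMatrix s n *ᵥ fun k => q.coeff k := by
  conv_lhs => rw [p.as_sum_range' n hp, q.as_sum_range' n hq]
  rw [Finset.sum_mul_sum]
  simp only [monomial_mul_monomial, map_sum, momentFunctional_monomial, Finset.sum_range,
    dotProduct, mulVec, hankelMatrix, Matrix.of_apply, Finset.mul_sum]
  refine Finset.sum_congr rfl fun i _ => Finset.sum_congr rfl fun k _ => ?_
  ring

/-- The sequence of monic orthogonal polynomials of the moment functional of `s`: `P j` is monic of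
degree `j` and orthogonal to all lower powers of `X`. -/
structure IsMonicOrthogonal (s : ℕ → R) (P : ℕ → R[X]) : Prop where
  monic (j : ℕ) : (P j).Monic
  natDegree_eq (j : ℕ) : (P j).natDegree = j
  orthogonal_X_pow (j k : ℕ) (hkj : k < j) : momentFunctional s (P j * X ^ k) = 0

namespace IsMonicOrthogonal

variable {s : ℕ → R} {P : ℕ → R[X]}

lemma orthogonal_of_natDegree_lt (hP : IsMonicOrthogonal s P) {j : ℕ} {q : R[X]}
    (hq : q.natDegree < j) : momentFunctional s (P j * q) = 0 := by
  rw [q.as_sum_range_C_mul_X_pow' hq, Finset.mul_sum, map_sum]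
  refine Finset.sum_eq_zero fun k hk => ?_
  rw [mul_left_comm, ← smul_eq_C_mul, map_smul,
    hP.orthogonal_X_pow j k (Finset.mem_range.mp hk), smul_zero]

lemma orthogonal (hP : IsMonicOrthogonal s P) {j k : ℕ} (hjk : j ≠ k) :
    momentFunctional s (P j * P k) = 0 := by
  rcases hjk.lt_or_gt with hlt | hgt
  · rw [mul_comm]
    exact hP.orthogonal_of_natDegree_lt ((hP.natDegree_eq j).trans_lt hlt)
  · exact hP.orthogonal_of_natDegree_lt ((hP.natDegree_eq k).trans_lt hgt)

end IsMonicOrthogonal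

section Symmetrization

variable {S : R[X] →ₗ[R] R}

lemma map_comp_X_sq_eq_zero (hSeven : ∀ j : ℕ, S (X ^ (2 * j)) = 0) (q : R[X]) :
    S (q.comp (X ^ 2)) = 0 := by
  induction q using Polynomial.induction_on' with
  | add p q hp hq => rw [add_comp, map_add, hp, hq, add_zero]
  | monomial n a =>
    rw [monomial_comp, ← pow_mul, ← smul_eq_C_mul, map_smul, hSeven, smul_zero]

lemma map_X_mul_comp_X_sq {s : ℕ → R} (hSodd : ∀ j : ℕ, S (X ^ (2 * j + 1)) = s j) (q : R[X]) :
    S (X * q.comp (X ^ 2)) = momentFunctional s q := by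
  induction q using Polynomial.induction_on' with
  | add p q hp hq => rw [add_comp, mul_add, map_add, map_add, hp, hq]
  | monomial n a =>
    rw [monomial_comp, ← pow_mul, mul_left_comm, ← pow_succ', ← smul_eq_C_mul, map_smul, hSodd,
      momentFunctional_monomial, smul_eq_mul]

end Symmetrization

end CommSemiring

section CommRing

variable {R : Type*} [CommRing R] {s : ℕ → R} {P : ℕ → R[X]}

lemma det_momentFunctional_mul_eq_det_hankelMatrix (hmonic : ∀ j, (P j).Monic)
    (hdeg : ∀ j, (P j).natDegree = j) (n : ℕ) :
    (Matrix.of fun i k : Fin n => momentFunctional s (P i * P k)).det =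
      (hankelMatrix s n).det := by
  let A : Matrix (Fin n) (Fin n) R := Matrix.of fun i k => (P k).coeff i
  have hdetA : A.det = 1 :=
    Matrix.det_matrixOfPolynomials (fun i : Fin n => P i) (fun i => hdeg i) fun i => hmonic i
  have hgram : Matrix.of (fun i k : Fin n => momentFunctional s (P i * P k)) =
      A.transpose * hankelMatrix s n * A := by
    ext i k
    rw [Matrix.mul_mul_apply, Matrix.of_apply,
      momentFunctional_mul s ((hdeg i).trans_lt i.2) ((hdeg k).trans_lt k.2)]
    rfl
  rw [hgram, Matrix.det_mul, Matrix.det_mul, Matrix.det_transpose, hdetA, one_mul, mul_one]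

namespace IsMonicOrthogonal

lemma det_hankelMatrix_eq_prod (hP : IsMonicOrthogonal s P) (n : ℕ) :
    (hankelMatrix s n).det = ∏ i ∈ Finset.range n, momentFunctional s (P i * P i) := by
  have hdiag : Matrix.of (fun i k : Fin n => momentFunctional s (P i * P k)) =
      Matrix.diagonal fun i : Fin n => momentFunctional s (P i * P i) := by
    ext i k
    obtain rfl | hik := eq_or_ne i k
    · rw [Matrix.of_apply, Matrix.diagonal_apply_eq]
    · rw [Matrix.of_apply, Matrix.diagonal_apply_ne _ hik,
        hP.orthogonal (Fin.val_injective.ne hik)]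
  rw [← det_momentFunctional_mul_eq_det_hankelMatrix hP.monic hP.natDegree_eq, hdiag,
    Matrix.det_diagonal, Finset.prod_range]

lemma det_hankelMatrix_succ (hP : IsMonicOrthogonal s P) (n : ℕ) :
    (hankelMatrix s (n + 1)).det =
      (hankelMatrix s n).det * momentFunctional s (P n * P n) := by
  rw [hP.det_hankelMatrix_eq_prod, hP.det_hankelMatrix_eq_prod, Finset.prod_range_succ]

end IsMonicOrthogonal

end CommRing

lemma integral_eval_eq_momentFunctional {𝕜 : Type*} [RCLike 𝕜] [MeasurableSpace 𝕜] {μ : Measure 𝕜}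
    (hint : ∀ j : ℕ, Integrable (fun t : 𝕜 => t ^ j) μ) {s : ℕ → 𝕜}
    (hs : ∀ j, s j = ∫ t, t ^ j ∂μ) (q : 𝕜[X]) :
    ∫ t, q.eval t ∂μ = momentFunctional s q := by
  conv_rhs => rw [q.as_sum_range]
  simp only [eval_eq_sum_range, map_sum, momentFunctional_monomial, hs]
  rw [integral_finsetSum _ fun i _ => (hint i).const_mul _]
  simp only [integral_const_mul]

lemma IsMonicOrthogonal.of_integral {𝕜 : Type*} [RCLike 𝕜] [MeasurableSpace 𝕜] {μ : Measure 𝕜}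
    (hint : ∀ j : ℕ, Integrable (fun t : 𝕜 => t ^ j) μ) {s : ℕ → 𝕜}
    (hs : ∀ j, s j = ∫ t, t ^ j ∂μ) {P : ℕ → 𝕜[X]} (hmonic : ∀ j, (P j).Monic)
    (hdeg : ∀ j, (P j).natDegree = j)
    (horth : ∀ j k : ℕ, k < j → ∫ t, (P j).eval t * t ^ k ∂μ = 0) : IsMonicOrthogonal s P where
  monic := hmonic
  natDegree_eq := hdeg
  orthogonal_X_pow j k hkj := by
    simpa only [← integral_eval_eq_momentFunctional hint hs, eval_mul, eval_pow, eval_X]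
      using horth j k hkj

/-- `hDne` says that the moment functional of `s` is quasi-definite. -/
theorem stmt_1_general {K : Type*} [Field K] {s D : ℕ → K}
    (hD : ∀ n, D n = (hankelMatrix s n).det) (hDne : ∀ n, D n ≠ 0)
    {P : ℕ → K[X]} (hP : IsMonicOrthogonal s P) {S : K[X] →ₗ[K] K}
    (hSeven : ∀ j : ℕ, S (X ^ (2 * j)) = 0) (hSodd : ∀ j : ℕ, S (X ^ (2 * j + 1)) = s j)
    {T : ℕ → K[X]} (hTeven : ∀ j, T (2 * j) = (P j).comp (X ^ 2))
    (hTodd : ∀ j, T (2 * j + 1) = X * (P j).comp (X ^ 2)) (j k : ℕ) :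
    S (T (2 * j + 1) * T k) = (D (j + 1) / D j) * (if 2 * j = k then 1 else 0) := by
  rcases Nat.even_or_odd' k with ⟨m, rfl | rfl⟩
  · have hpair : S (T (2 * j + 1) * T (2 * m)) = momentFunctional s (P j * P m) := by
      rw [hTodd, hTeven, mul_assoc, ← mul_comp, map_X_mul_comp_X_sq hSodd]
    obtain rfl | hjm := eq_or_ne j m
    · rw [hpair, if_pos rfl, mul_one, eq_div_iff (hDne j), hD, hD, hP.det_hankelMatrix_succ,
        mul_comm]
    · rw [hpair, hP.orthogonal hjm, if_neg (by omega), mul_zero]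
  · have heven : T (2 * j + 1) * T (2 * m + 1) = (X * P j * P m).comp (X ^ 2) := by
      rw [hTodd, hTodd, mul_comp, mul_comp, X_comp]
      ring
    rw [heven, map_comp_X_sq_eq_zero hSeven, if_neg (by omega), mul_zero]

/-- For all `j, k ≥ 0` one has
`𝔖(𝔗_{2j+1}·𝔗_k) = (D_j / D_{j-1}) · δ_{2j,k}`.
Here `D (n+1)` is the Hankel determinant of order `n` and `D 0 = 1` plays the
role of `D_{-1}`. -/
theorem stmt_1
    (μ : Measure ℝ) [IsProbabilityMeasure μ]
    (hint : ∀ j : ℕ, Integrable (fun t : ℝ => t ^ j) μ)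
    (s : ℕ → ℝ) (hs : ∀ j, s j = ∫ t, t ^ j ∂μ)
    (D : ℕ → ℝ) (hD0 : D 0 = 1)
    (hD : ∀ n : ℕ, D (n + 1) = (Matrix.of fun i k : Fin (n + 1) => s (i.1 + k.1)).det)
    (hDpos : ∀ n, 0 < D n)
    (P : ℕ → Polynomial ℝ)
    (hPmonic : ∀ j, (P j).Monic) (hPdeg : ∀ j, (P j).natDegree = j)
    (hPorth : ∀ j k : ℕ, k < j → ∫ t, (P j).eval t * t ^ k ∂μ = 0)
    (S : Polynomial ℝ →ₗ[ℝ] ℝ)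
    (hSeven : ∀ j : ℕ, S (X ^ (2 * j)) = 0)
    (hSodd : ∀ j : ℕ, S (X ^ (2 * j + 1)) = s j)
    (T : ℕ → Polynomial ℝ)
    (hTeven : ∀ j, T (2 * j) = (P j).comp (X ^ 2))
    (hTodd : ∀ j, T (2 * j + 1) = X * (P j).comp (X ^ 2)) :
    ∀ j k : ℕ, S (T (2 * j + 1) * T k) = (D (j + 1) / D j) * (if 2 * j = k then 1 else 0) := by
  have hDdet (n : ℕ) : D n = (hankelMatrix s n).det := by
    cases n with
    | zero => rw [hD0, Matrix.det_fin_zero]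
    | succ n => exact hD n
  exact stmt_1_general hDdet (fun n => (hDpos n).ne')
    (.of_integral hint hs hPmonic hPdeg hPorth) hSeven hSodd hTeven hTodd
end

section
/- Let a > 0 and 0 < α < √a. Then (−1)^j·P_j(α²) > 0 for every j ≥ 0; moreover, defining u_j^{(α)} = −P_{j+1}(α²)/P_j(α²), l_0^{(α)} = 0 and l_{j+1}^{(α)} = c_j/u_j^{(α)}, one has for all n ≥ 0: u_n^{(α)} > 0, l_{n+1}^{(α)} > 0, b_n − α² = u_n^{(α)} + l_n^{(α)}, and c_n = l_{n+1}^{(α)}·u_n^{(α)}. (These identities express the shifted LU factorization J − α²·I = LU of the monic Jacobi matrix J.) -/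
open Polynomial MeasureTheory

/-!
A polynomial orthogonal to all polynomials of smaller degree has no zero `x ≤ a`: if
`p = (X - x) * q`, then orthogonality of `p` to `q` says `∫ (t - x) * q(t)² dμ = 0`, while the
integrand is nonnegative on `[a, ∞)` and `μ` is not carried by the zeros of a nonzero polynomial.
So `P_j` keeps on `(-∞, a]` its sign `(-1)^j` at `-∞`. Hence the ratios `u_j` are positive,
and dividing the recurrence at `x` by `P_n(x)` gives the factorization.
-/

section FiniteMoments

variable {μ : Measure ℝ}

lemma integrable_polynomial_eval (hint : ∀ j : ℕ, Integrable (fun t : ℝ => t ^ j) μ) (p : ℝ[X]) :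
    Integrable (fun t => p.eval t) μ := by
  simp only [eval_eq_sum_range]
  exact integrable_finsetSum _ fun i _ => (hint i).const_mul _

lemma integral_eval_mul_eq_zero_of_natDegree_lt
    (hint : ∀ j : ℕ, Integrable (fun t : ℝ => t ^ j) μ) {p q : ℝ[X]} {n : ℕ}
    (horth : ∀ k < n, ∫ t, p.eval t * t ^ k ∂μ = 0) (hq : q.natDegree < n) :
    ∫ t, (p * q).eval t ∂μ = 0 := by
  have hterm (k : ℕ) : Integrable (fun t => p.eval t * t ^ k) μ :=
    (integrable_polynomial_eval hint (p * X ^ k)).congr (.of_forall fun t => by simp)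
  calc ∫ t, (p * q).eval t ∂μ
      = ∫ t, ∑ k ∈ Finset.range n, q.coeff k * (p.eval t * t ^ k) ∂μ := by
        simp only [eval_mul, eval_eq_sum_range' hq, Finset.mul_sum, mul_left_comm]
    _ = ∑ k ∈ Finset.range n, q.coeff k * ∫ t, p.eval t * t ^ k ∂μ := by
        rw [integral_finsetSum _ fun k _ => (hterm k).const_mul _]
        simp only [integral_const_mul]
    _ = 0 := Finset.sum_eq_zero fun k hk => by rw [horth k (Finset.mem_range.1 hk), mul_zero]

lemma eq_zero_of_ae_eval_eq_zero_of_det_hankel_ne_zero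
    (hint : ∀ j : ℕ, Integrable (fun t : ℝ => t ^ j) μ) {p : ℝ[X]}
    (hdet : (Matrix.of fun i k : Fin (p.natDegree + 1) => ∫ t, t ^ (i.1 + k.1) ∂μ).det ≠ 0)
    (hp : ∀ᵐ t ∂μ, p.eval t = 0) : p = 0 := by
  have hcoeff : (fun k : Fin (p.natDegree + 1) => p.coeff k) = 0 := by
    -- The Hankel matrix maps the coefficient vector of `p` to the integrals of `t ^ i * p(t)`.
    refine Matrix.eq_zero_of_mulVec_eq_zero hdet (funext fun i => ?_)
    calc ∑ k : Fin (p.natDegree + 1), (∫ t, t ^ (i.1 + k.1) ∂μ) * p.coeff k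
        = ∫ t, ∑ k : Fin (p.natDegree + 1), t ^ (i.1 + k.1) * p.coeff k ∂μ := by
          rw [integral_finsetSum _ fun k _ => (hint _).mul_const _]
          simp only [integral_mul_const]
      _ = ∫ t, t ^ i.1 * p.eval t ∂μ := by
          simp only [eval_eq_sum_range, Finset.sum_range, Finset.mul_sum, pow_add, mul_assoc,
            mul_comm (p.coeff _)]
      _ = 0 := integral_eq_zero_of_ae (hp.mono fun t ht => by simp [ht])
  exact leadingCoeff_eq_zero.1 (congrFun hcoeff (Fin.last p.natDegree))

variable {a x : ℝ}

lemma integral_X_sub_C_mul_sq_pos (hsupp : ∀ᵐ t ∂μ, a ≤ t)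
    (hint : ∀ j : ℕ, Integrable (fun t : ℝ => t ^ j) μ)
    (hμ : ∀ p : ℝ[X], (∀ᵐ t ∂μ, p.eval t = 0) → p = 0) (hx : x ≤ a) {q : ℝ[X]} (hq : q ≠ 0) :
    0 < ∫ t, ((X - C x) * q ^ 2).eval t ∂μ := by
  have hnonneg : ∀ᵐ t ∂μ, 0 ≤ ((X - C x) * q ^ 2).eval t := by
    filter_upwards [hsupp] with t ht
    simp only [eval_mul, eval_sub, eval_X, eval_C, eval_pow]
    exact mul_nonneg (sub_nonneg.2 (hx.trans ht)) (sq_nonneg _)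
  refine (integral_nonneg_of_ae hnonneg).lt_of_ne' fun hzero => ?_
  exact mul_ne_zero (X_sub_C_ne_zero x) (pow_ne_zero 2 hq) <| hμ _ <|
    (integral_eq_zero_iff_of_nonneg_ae hnonneg (integrable_polynomial_eval hint _)).1 hzero

lemma lt_of_isRoot_of_orthogonal (hsupp : ∀ᵐ t ∂μ, a ≤ t)
    (hint : ∀ j : ℕ, Integrable (fun t : ℝ => t ^ j) μ)
    (hμ : ∀ p : ℝ[X], (∀ᵐ t ∂μ, p.eval t = 0) → p = 0) {p : ℝ[X]} (hp : p ≠ 0)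
    (horth : ∀ k < p.natDegree, ∫ t, p.eval t * t ^ k ∂μ = 0) (hroot : p.IsRoot x) : a < x := by
  by_contra! hx
  obtain ⟨q, rfl⟩ := dvd_iff_isRoot.2 hroot
  have hq : q ≠ 0 := right_ne_zero_of_mul hp
  have hdeg : q.natDegree < ((X - C x) * q).natDegree := by
    rw [natDegree_mul (X_sub_C_ne_zero x) hq, natDegree_X_sub_C]
    lia
  have hpos := integral_X_sub_C_mul_sq_pos hsupp hint hμ hx hq
  rw [sq, ← mul_assoc, integral_eval_mul_eq_zero_of_natDegree_lt hint horth hdeg] at hpos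
  exact hpos.false

lemma neg_one_pow_mul_eval_pos_of_orthogonal (hsupp : ∀ᵐ t ∂μ, a ≤ t)
    (hint : ∀ j : ℕ, Integrable (fun t : ℝ => t ^ j) μ)
    (hμ : ∀ p : ℝ[X], (∀ᵐ t ∂μ, p.eval t = 0) → p = 0) (hx : x ≤ a) {p : ℝ[X]} (hp : p.Monic)
    (horth : ∀ k < p.natDegree, ∫ t, p.eval t * t ^ k ∂μ = 0) :
    0 < (-1) ^ p.natDegree * p.eval x := by
  have hroots (y : ℝ) (hy : p.IsRoot y) : x < y :=
    hx.trans_lt (lt_of_isRoot_of_orthogonal hsupp hint hμ hp.ne_zero horth hy)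
  simpa [Int.cast_negOnePow_natCast] using
    zero_lt_negOnePow_mul_eval_of_lt_roots_of_leadingCoeff_nonneg hroots (by simp [hp.leadingCoeff])

end FiniteMoments

lemma neg_div_pos_of_alternating {K : Type*} [Field K] [LinearOrder K] [IsStrictOrderedRing K]
    {y z : K} {n : ℕ} (hy : 0 < (-1) ^ n * y) (hz : 0 < (-1) ^ (n + 1) * z) : 0 < -z / y := by
  have hz' : 0 < (-1) ^ n * -z := by simpa [pow_succ] using hz
  rw [← mul_div_mul_left (-z) y (pow_ne_zero n (neg_ne_zero.2 one_ne_zero))]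
  exact div_pos hz' hy

lemma sub_eq_add_of_three_term_recurrence {K : Type*} [Field K] {y b c u l : ℕ → K} {x : K}
    (hy : ∀ n, y n ≠ 0) (hrec0 : x * y 0 = y 1 + b 0 * y 0)
    (hrec : ∀ n, x * y (n + 1) = y (n + 2) + b (n + 1) * y (n + 1) + c n * y n)
    (hu : ∀ n, u n = -y (n + 1) / y n) (hl0 : l 0 = 0) (hl : ∀ n, l (n + 1) = c n / u n) (n : ℕ) :
    b n - x = u n + l n := by
  cases n with
  | zero =>
    have := hy 0
    rw [hl0, hu]
    field_simp
    linear_combination -hrec0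
  | succ n =>
    have := hy n
    have := hy (n + 1)
    rw [hl, hu, hu]
    field_simp
    linear_combination -hrec n

theorem stmt_12_general {a x : ℝ} (hx : x ≤ a) {μ : Measure ℝ} (hsupp : ∀ᵐ t ∂μ, a ≤ t)
    (hint : ∀ j : ℕ, Integrable (fun t : ℝ => t ^ j) μ)
    (hμ : ∀ p : ℝ[X], (∀ᵐ t ∂μ, p.eval t = 0) → p = 0)
    {P : ℕ → ℝ[X]} (hPmonic : ∀ j, (P j).Monic) (hPdeg : ∀ j, (P j).natDegree = j)
    (hPorth : ∀ j k : ℕ, k < j → ∫ t, (P j).eval t * t ^ k ∂μ = 0)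
    {b c : ℕ → ℝ} (hc : ∀ j, 0 < c j) (hrec0 : X * P 0 = P 1 + C (b 0) * P 0)
    (hrec : ∀ j : ℕ, X * P (j + 1) = P (j + 2) + C (b (j + 1)) * P (j + 1) + C (c j) * P j)
    {u l : ℕ → ℝ} (hu : ∀ j, u j = -(P (j + 1)).eval x / (P j).eval x)
    (hl0 : l 0 = 0) (hl : ∀ j, l (j + 1) = c j / u j) :
    (∀ j : ℕ, 0 < (-1 : ℝ) ^ j * (P j).eval x) ∧
    (∀ n : ℕ, 0 < u n ∧ 0 < l (n + 1) ∧ b n - x = u n + l n ∧ c n = l (n + 1) * u n) := by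
  have hsign (j : ℕ) : 0 < (-1 : ℝ) ^ j * (P j).eval x := by
    simpa only [hPdeg] using neg_one_pow_mul_eval_pos_of_orthogonal hsupp hint hμ hx (hPmonic j)
      (by simpa only [hPdeg] using hPorth j)
  have hupos (n : ℕ) : 0 < u n := hu n ▸ neg_div_pos_of_alternating (hsign n) (hsign (n + 1))
  have hLU (n : ℕ) : b n - x = u n + l n :=
    sub_eq_add_of_three_term_recurrence (fun j => right_ne_zero_of_mul (hsign j).ne')
      (by simpa using congrArg (eval x) hrec0) (fun j => by simpa using congrArg (eval x) (hrec j))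
      hu hl0 hl n
  exact ⟨hsign, fun n => ⟨hupos n, hl n ▸ div_pos (hc n) (hupos n), hLU n,
    by rw [hl, div_mul_cancel₀ _ (hupos n).ne']⟩⟩

/-- for `0 < α < √a` one has `(-1)^j·P_j(α²) > 0`, and with
`u_j = -P_{j+1}(α²)/P_j(α²)`, `l_0 = 0`, `l_{j+1} = c_j/u_j`:
`u_n > 0`, `l_{n+1} > 0`, `b_n - α² = u_n + l_n`, `c_n = l_{n+1}·u_n`
(the shifted LU factorization `J - α²·I = LU`). -/
theorem stmt_12
    (a : ℝ) (ha : 0 < a)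
    (μ : Measure ℝ) [IsProbabilityMeasure μ]
    (hsupp : ∀ᵐ t ∂μ, a ≤ t)
    (hint : ∀ j : ℕ, Integrable (fun t : ℝ => t ^ j) μ)
    (s : ℕ → ℝ) (hs : ∀ j, s j = ∫ t, t ^ j ∂μ)
    (hDpos : ∀ n : ℕ, 0 < (Matrix.of fun i k : Fin (n + 1) => s (i.1 + k.1)).det)
    (P : ℕ → Polynomial ℝ)
    (hPmonic : ∀ j, (P j).Monic) (hPdeg : ∀ j, (P j).natDegree = j)
    (hPorth : ∀ j k : ℕ, k < j → ∫ t, (P j).eval t * t ^ k ∂μ = 0)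
    (b c : ℕ → ℝ) (hc : ∀ j, 0 < c j)
    (hrec0 : X * P 0 = P 1 + C (b 0) * P 0)
    (hrec : ∀ j : ℕ, X * P (j + 1) = P (j + 2) + C (b (j + 1)) * P (j + 1) + C (c j) * P j)
    (α : ℝ) (hα0 : 0 < α) (hαa : α < Real.sqrt a)
    (u : ℕ → ℝ) (hu : ∀ j, u j = -((P (j + 1)).eval (α ^ 2)) / (P j).eval (α ^ 2))
    (l : ℕ → ℝ) (hl0 : l 0 = 0) (hl : ∀ j, l (j + 1) = c j / u j) :
    (∀ j : ℕ, 0 < (-1 : ℝ) ^ j * (P j).eval (α ^ 2)) ∧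
    (∀ n : ℕ, 0 < u n ∧ 0 < l (n + 1) ∧ b n - α ^ 2 = u n + l n ∧ c n = l (n + 1) * u n) := by
  obtain rfl : s = fun j => ∫ t, t ^ j ∂μ := funext hs
  exact stmt_12_general ((Real.lt_sqrt hα0.le).1 hαa).le hsupp hint
    (fun _ => eq_zero_of_ae_eval_eq_zero_of_det_hankel_ne_zero hint (hDpos _).ne')
    hPmonic hPdeg hPorth hc hrec0 hrec hu hl0 hl
end

section
/- Let α ∈ ℝ with α² < a. Then for every j ≥ 1 the determinant det((s_{1+l+k} − α²·s_{l+k})_{l,k=0}^{j−1}) is positive, and P_j(α²) = ((−1)^j / D_{j−1}) · det((s_{1+l+k} − α²·s_{l+k})_{l,k=0}^{j−1}), where D_{−1} = 1. -/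
open Polynomial MeasureTheory

/-!
Write `b = α ^ 2`, `H` for the Hankel matrix of the moments of `μ` and `K` for that of the moments
of `(t - b) μ`.

The matrix `H` is positive semidefinite with nonzero determinant, hence positive definite, and `K`
is the sum of `(a - b) H` and of the Hankel matrix of the positive measure `(t - a) μ`. So `K` is
positive definite.

On `ℝ[X] ⧸ (P_j)`, with basis `1, X, …, X ^ (j - 1)`, let `M` be the matrix of multiplication by
`X - b`. Orthogonality means that the integral of `X ^ l * f`, for `l < j` and `deg f ≤ j`, only
depends on `f` modulo `P_j`, which says that `K = H * M`. The determinant of `M` is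
`(-1) ^ j * P_j(b)` because `P_j` is the characteristic polynomial of multiplication by `X`.
-/

section CommRing

variable {R : Type*} [CommRing R]

/-- The `n × n` Hankel matrix of a sequence. -/
def hankel {S : Type*} (s : ℕ → S) (n : ℕ) : Matrix (Fin n) (Fin n) S :=
  Matrix.of fun i k => s (i + k)

/-- The Riesz functional of a sequence `s`: the linear functional on polynomials sending `X ^ j` to
`s j`. If `s` is the moment sequence of a measure, it is integration of polynomials. -/
noncomputable def rieszFunctional (s : ℕ → R) : R[X] →ₗ[R] R :=
  lsum fun j => LinearMap.toSpanSingleton R R (s j)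

/-- The Christoffel transform of a sequence at `b`. If `s` is the moment sequence of `μ`, this is
the moment sequence of `(t - b) μ`. -/
def christoffel (b : R) (s : ℕ → R) (j : ℕ) : R :=
  s (1 + j) - b * s j

theorem rieszFunctional_eq_sum (s : ℕ → R) (q : R[X]) :
    rieszFunctional s q = q.sum fun j c => c * s j :=
  rfl

theorem rieszFunctional_monomial (s : ℕ → R) (j : ℕ) (c : R) :
    rieszFunctional s (monomial j c) = c * s j := by
  rw [rieszFunctional_eq_sum, sum_monomial_index c (fun j c => c * s j) (zero_mul _)]

theorem rieszFunctional_christoffel (b : R) (s : ℕ → R) (q : R[X]) :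
    rieszFunctional (christoffel b s) q = rieszFunctional s ((X - C b) * q) := by
  induction q using Polynomial.induction_on' with
  | add p q hp hq => rw [mul_add, map_add, map_add, hp, hq]
  | monomial j c =>
    rw [sub_mul, X_mul_monomial, C_mul_monomial, map_sub]
    simp only [rieszFunctional_monomial, christoffel, add_comm 1 j]
    ring

theorem hankel_christoffel_eq_add_smul (a b : R) (s : ℕ → R) (n : ℕ) :
    hankel (christoffel b s) n = (a - b) • hankel s n + hankel (christoffel a s) n := by
  ext i k
  simp only [hankel, christoffel, Matrix.of_apply, Matrix.add_apply, Matrix.smul_apply, smul_eq_mul]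
  ring

theorem dotProduct_hankel_mulVec (s : ℕ → R) {n : ℕ} (x y : Fin n → R) :
    x ⬝ᵥ (hankel s n).mulVec y =
      rieszFunctional s ((∑ i, monomial i.1 (x i)) * ∑ k, monomial k.1 (y k)) := by
  rw [Finset.sum_mul_sum]
  simp only [monomial_mul_monomial, map_sum, rieszFunctional_monomial,
    dotProduct, Matrix.mulVec, hankel, Matrix.of_apply, Finset.mul_sum]
  exact Finset.sum_congr rfl fun i _ => Finset.sum_congr rfl fun k _ => by ring

theorem leftMulMatrix_powerBasisAux'_apply {p : R[X]} (hp : p.Monic) (g : R[X])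
    (i k : Fin p.natDegree) :
    Algebra.leftMulMatrix (AdjoinRoot.powerBasisAux' hp) (AdjoinRoot.mk p g) i k =
      (g * X ^ k.1 %ₘ p).coeff i := by
  have hbasis : AdjoinRoot.powerBasisAux' hp k = AdjoinRoot.mk p (X ^ k.1) := by
    rw [map_pow, AdjoinRoot.mk_X]
    exact (AdjoinRoot.powerBasis' hp).basis_eq_pow k
  rw [Algebra.leftMulMatrix_eq_repr_mul, hbasis, ← map_mul,
    AdjoinRoot.powerBasisAux'_repr_apply_to_fun, AdjoinRoot.modByMonicHom_mk]

theorem minpoly_adjoinRoot_root {p : R[X]} (hp : p.Monic) :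
    minpoly R (AdjoinRoot.root p) = p := by
  refine (minpoly.unique' R _ hp (by simp) fun q hq => ?_).symm
  refine or_iff_not_imp_left.2 fun hq0 hroot => hp.not_dvd_of_degree_lt hq0 hq ?_
  rwa [AdjoinRoot.aeval_eq, AdjoinRoot.mk_eq_zero] at hroot

theorem det_leftMulMatrix_mk_X_sub_C {p : R[X]} (hp : p.Monic) (b : R) :
    (Algebra.leftMulMatrix (AdjoinRoot.powerBasisAux' hp)
      (AdjoinRoot.mk p (X - C b))).det = (-1) ^ p.natDegree * p.eval b := by
  set M := Algebra.leftMulMatrix (AdjoinRoot.powerBasisAux' hp)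
  have hchar : (M (AdjoinRoot.root p)).charpoly = p :=
    (charpoly_leftMulMatrix (AdjoinRoot.powerBasis' hp)).trans (minpoly_adjoinRoot_root hp)
  have hM : M (AdjoinRoot.mk p (X - C b)) = -(Matrix.scalar _ b - M (AdjoinRoot.root p)) := by
    rw [neg_sub, map_sub, map_sub, AdjoinRoot.mk_X]
    congr 1
    exact M.commutes b
  rw [hM, Matrix.det_neg, ← Matrix.eval_charpoly, hchar, Fintype.card_fin]

theorem map_mul_modByMonic {M : Type*} [AddCommGroup M] [Module R M] (L : R[X] →ₗ[R] M)
    {p q f : R[X]} (hp : p.Monic) (hq : L (p * q) = 0) (hf : f.natDegree ≤ p.natDegree) :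
    L (q * (f %ₘ p)) = L (q * f) := by
  obtain ⟨c, hc⟩ : ∃ c, C c = f /ₘ p :=
    natDegree_eq_zero.1 (by rw [natDegree_divByMonic f hp, Nat.sub_eq_zero_of_le hf])
  have hsplit : q * f = q * (f %ₘ p) + c • (p * q) := by
    conv_lhs => rw [← modByMonic_add_div f p, ← hc]
    rw [smul_eq_C_mul]
    ring
  rw [hsplit, map_add, map_smul, hq, smul_zero, add_zero]

section Orthogonal

variable {s : ℕ → R} {p : R[X]}

theorem hankel_christoffel_eq_mul (hp : p.Monic)
    (horth : ∀ l < p.natDegree, rieszFunctional s (p * X ^ l) = 0) (b : R) :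
    hankel (christoffel b s) p.natDegree = hankel s p.natDegree *
      Algebra.leftMulMatrix (AdjoinRoot.powerBasisAux' hp) (AdjoinRoot.mk p (X - C b)) := by
  ext l k
  set f : R[X] := (X - C b) * X ^ k.1
  have hf : f.natDegree ≤ p.natDegree :=
    natDegree_mul_le.trans (by grw [natDegree_X_sub_C_le, natDegree_X_pow_le]; omega)
  calc hankel (christoffel b s) p.natDegree l k
      = rieszFunctional s (X ^ l.1 * f) := by
        rw [mul_left_comm, ← pow_add, ← rieszFunctional_christoffel, X_pow_eq_monomial,
          rieszFunctional_monomial, one_mul, hankel, Matrix.of_apply]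
    _ = rieszFunctional s (X ^ l.1 * ∑ i : Fin p.natDegree, monomial i.1 ((f %ₘ p).coeff i)) := by
        rw [sum_modByMonic_coeff hp degree_le_natDegree,
          map_mul_modByMonic _ hp (horth l l.2) hf]
    _ = ∑ i : Fin p.natDegree, s (l + i) * (f %ₘ p).coeff i := by
        simp only [Finset.mul_sum, X_pow_eq_monomial, monomial_mul_monomial, map_sum,
          rieszFunctional_monomial, one_mul, mul_comm]
    _ = _ := by
        simp only [Matrix.mul_apply, leftMulMatrix_powerBasisAux'_apply, hankel, Matrix.of_apply, f]

theorem det_hankel_christoffel (hp : p.Monic)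
    (horth : ∀ l < p.natDegree, rieszFunctional s (p * X ^ l) = 0) (b : R) :
    (hankel (christoffel b s) p.natDegree).det =
      (-1) ^ p.natDegree * p.eval b * (hankel s p.natDegree).det := by
  rw [hankel_christoffel_eq_mul hp horth, Matrix.det_mul, det_leftMulMatrix_mk_X_sub_C, mul_comm]

end Orthogonal

end CommRing

theorem eval_eq_div_mul_det_hankel_christoffel {K : Type*} [Field K] {s : ℕ → K} {p : K[X]}
    (hp : p.Monic) (horth : ∀ l < p.natDegree, rieszFunctional s (p * X ^ l) = 0)
    (hdet : (hankel s p.natDegree).det ≠ 0) (b : K) :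
    p.eval b = (-1) ^ p.natDegree / (hankel s p.natDegree).det *
      (hankel (christoffel b s) p.natDegree).det := by
  have hsign : (-1 : K) ^ p.natDegree * (-1) ^ p.natDegree = 1 :=
    pow_mul_pow_eq_one _ (by rw [neg_one_mul, neg_neg])
  rw [det_hankel_christoffel hp horth]
  field_simp
  linear_combination -p.eval b * hsign

theorem posSemidef_hankel {s : ℕ → ℝ} (hs : ∀ q : ℝ[X], 0 ≤ rieszFunctional s (q * q)) (n : ℕ) :
    (hankel s n).PosSemidef := by
  refine .of_dotProduct_mulVec_nonneg ?_ fun x => ?_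
  · ext i k
    simp [hankel, add_comm]
  · rw [star_trivial, dotProduct_hankel_mulVec]
    exact hs _

theorem posDef_hankel_christoffel {s : ℕ → ℝ} {n : ℕ} {a b : ℝ} (hb : b < a)
    (hH : (hankel s n).PosDef) (ha : (hankel (christoffel a s) n).PosSemidef) :
    (hankel (christoffel b s) n).PosDef := by
  rw [hankel_christoffel_eq_add_smul a]
  exact (hH.smul (sub_pos.2 hb)).add_posSemidef ha

section Moments

variable {μ : Measure ℝ} {s : ℕ → ℝ}

theorem rieszFunctional_eq_integral
    (hint : ∀ j : ℕ, Integrable (fun t : ℝ => t ^ j) μ) (hs : ∀ j, s j = ∫ t, t ^ j ∂μ) (q : ℝ[X]) :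
    rieszFunctional s q = ∫ t, q.eval t ∂μ := by
  simp only [rieszFunctional_eq_sum, Polynomial.sum, eval_eq_sum, hs]
  rw [integral_finsetSum _ fun j _ => (hint j).const_mul _]
  simp only [integral_const_mul]

theorem posSemidef_hankel_moments
    (hint : ∀ j : ℕ, Integrable (fun t : ℝ => t ^ j) μ) (hs : ∀ j, s j = ∫ t, t ^ j ∂μ) (n : ℕ) :
    (hankel s n).PosSemidef :=
  posSemidef_hankel (fun q => by
    simp only [rieszFunctional_eq_integral hint hs, eval_mul]
    exact integral_nonneg fun t => mul_self_nonneg _) n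

theorem posSemidef_hankel_christoffel_moments {a : ℝ} (hsupp : ∀ᵐ t ∂μ, a ≤ t)
    (hint : ∀ j : ℕ, Integrable (fun t : ℝ => t ^ j) μ) (hs : ∀ j, s j = ∫ t, t ^ j ∂μ) (n : ℕ) :
    (hankel (christoffel a s) n).PosSemidef := by
  refine posSemidef_hankel (fun q => ?_) n
  simp only [rieszFunctional_christoffel, rieszFunctional_eq_integral hint hs, eval_mul, eval_sub,
    eval_X, eval_C]
  refine integral_nonneg_of_ae ?_
  filter_upwards [hsupp] with t ht
  exact mul_nonneg (sub_nonneg.2 ht) (mul_self_nonneg _)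

theorem stmt_13_general {a b : ℝ} (hsupp : ∀ᵐ t ∂μ, a ≤ t)
    (hint : ∀ j : ℕ, Integrable (fun t : ℝ => t ^ j) μ) (hs : ∀ j, s j = ∫ t, t ^ j ∂μ)
    (hb : b < a) {n : ℕ} (hdet : (hankel s n).det ≠ 0) {p : ℝ[X]} (hp : p.Monic)
    (hdeg : p.natDegree = n) (horth : ∀ k < n, ∫ t, p.eval t * t ^ k ∂μ = 0) :
    0 < (hankel (christoffel b s) n).det ∧
      p.eval b = (-1) ^ n / (hankel s n).det * (hankel (christoffel b s) n).det := by
  subst hdeg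
  have hH : (hankel s p.natDegree).PosDef :=
    (posSemidef_hankel_moments hint hs _).posDef_iff_det_ne_zero.2 hdet
  have hK : (hankel (christoffel b s) p.natDegree).PosDef :=
    posDef_hankel_christoffel hb hH (posSemidef_hankel_christoffel_moments hsupp hint hs _)
  have hp_orth (k : ℕ) (hk : k < p.natDegree) : rieszFunctional s (p * X ^ k) = 0 := by
    rw [rieszFunctional_eq_integral hint hs]
    simpa only [eval_mul, eval_pow, eval_X] using horth k hk
  exact ⟨hK.det_pos, eval_eq_div_mul_det_hankel_christoffel hp hp_orth hdet b⟩

end Moments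

/-- for `α² < a` and every `j ≥ 1` (here `j = m + 1`), the
determinant `det((s_{1+l+k} - α²·s_{l+k})_{l,k=0}^{j-1})` is positive and
`P_j(α²) = ((-1)^j / D_{j-1})·det(...)`, where `D (m+1)` denotes the Hankel
determinant `D_m = det((s_{i+k})_{i,k=0}^{m})` and `D 0 = 1` plays the role of
`D_{-1}`. -/
theorem stmt_13
    (a : ℝ) (ha : 0 < a)
    (μ : Measure ℝ) [IsProbabilityMeasure μ]
    (hsupp : ∀ᵐ t ∂μ, a ≤ t)
    (hint : ∀ j : ℕ, Integrable (fun t : ℝ => t ^ j) μ)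
    (s : ℕ → ℝ) (hs : ∀ j, s j = ∫ t, t ^ j ∂μ)
    (D : ℕ → ℝ) (hD0 : D 0 = 1)
    (hD : ∀ n : ℕ, D (n + 1) = (Matrix.of fun i k : Fin (n + 1) => s (i.1 + k.1)).det)
    (hDpos : ∀ n, 0 < D n)
    (P : ℕ → Polynomial ℝ)
    (hPmonic : ∀ j, (P j).Monic) (hPdeg : ∀ j, (P j).natDegree = j)
    (hPorth : ∀ j k : ℕ, k < j → ∫ t, (P j).eval t * t ^ k ∂μ = 0)
    (α : ℝ) (hα : α ^ 2 < a) :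
    ∀ m : ℕ,
      0 < (Matrix.of fun l k : Fin (m + 1) =>
          s (1 + l.1 + k.1) - α ^ 2 * s (l.1 + k.1)).det ∧
      (P (m + 1)).eval (α ^ 2) =
        ((-1 : ℝ) ^ (m + 1) / D (m + 1)) *
          (Matrix.of fun l k : Fin (m + 1) =>
            s (1 + l.1 + k.1) - α ^ 2 * s (l.1 + k.1)).det := by
  intro m
  simpa only [hankel, christoffel, add_assoc, hD] using
    stmt_13_general hsupp hint hs hα (hD m ▸ (hDpos (m + 1)).ne') (hPmonic _) (hPdeg _) (hPorth _)
end
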